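/- Let A be an n×n real symmetric matrix and let A* be the (n−1)×(n−1) principal submatrix of A obtained by deleting one row and the column of the same index. If λ₁ ≥ λ₂ ≥ … ≥ λ_n are the eigenvalues of A listed in decreasing order and μ₁ ≥ μ₂ ≥ … ≥ μ_{n−1} are the eigenvalues of A* listed in decreasing order, then λ_i ≥ μ_i ≥ λ_{i+1} for every i = 1, …, n−1. -/

import Mathlib

open Polynomial

/-!
An eigenvalue `λ_i` of a symmetric operator bounds its Rayleigh quotient from below on the span of
the first eigenvectors and from above on the span of the last ones. Embed the space of the
compression isometrically into the large space. Once the dimensions of two such spans, one for each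
operator, add up to more than the dimension of the large space, the spans share a nonzero vector,
and the two bounds at that vector compare an eigenvalue of the compression with one of the operator.
A principal submatrix of `A` is the compression `Pᴴ * A * P` of `A` by a matrix `P` of standard
basis vectors.
-/

open Module Submodule
open scoped InnerProductSpace Matrix

section Subspaces

variable {K V : Type*} [DivisionRing K]

theorem exists_ne_zero_mem_mem_of_finrank_lt_add [AddCommGroup V] [Module K V]
    [FiniteDimensional K V] {U U' : Submodule K V}
    (h : finrank K V < finrank K U + finrank K U') : ∃ x ≠ 0, x ∈ U ∧ x ∈ U' := by
  have hdisj : ¬Disjoint U U' := fun hd => h.not_ge (finrank_add_finrank_le_of_disjoint hd)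
  obtain ⟨x, hx, hx0⟩ := exists_mem_ne_zero_of_ne_bot (disjoint_iff.not.mp hdisj)
  exact ⟨x, hx0, hx⟩

theorem le_of_finrank_lt_add_of_mul_norm_sq_le [NormedAddCommGroup V] [Module K V]
    [FiniteDimensional K V] {U U' : Submodule K V}
    (h : finrank K V < finrank K U + finrank K U') {q : V → ℝ} {a b : ℝ}
    (hU : ∀ x ∈ U, a * ‖x‖ ^ 2 ≤ q x) (hU' : ∀ x ∈ U', q x ≤ b * ‖x‖ ^ 2) : a ≤ b := by
  obtain ⟨x, hx0, hxU, hxU'⟩ := exists_ne_zero_mem_mem_of_finrank_lt_add h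
  exact le_of_mul_le_mul_right ((hU x hxU).trans (hU' x hxU')) (by positivity)

end Subspaces

theorem finrank_span_image_finset {R M ι : Type*} [Ring R] [Nontrivial R] [StrongRankCondition R]
    [AddCommGroup M] [Module R M] {v : ι → M} (hv : LinearIndependent R v) (s : Finset ι) :
    finrank R (span R (v '' s)) = s.card := by
  rw [Set.image_eq_range]
  exact (finrank_span_eq_card (hv.comp ((↑) : s → ι) Subtype.val_injective)).trans
    (Fintype.card_coe s)

theorem inner_eq_zero_of_mem_span_image {𝕜 V ι : Type*} [RCLike 𝕜] [SeminormedAddCommGroup V]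
    [InnerProductSpace 𝕜 V] {v : ι → V} (hv : Pairwise fun i j => ⟪v i, v j⟫_𝕜 = 0) {s : Set ι}
    {i : ι} (hi : i ∉ s) {x : V} (hx : x ∈ span 𝕜 (v '' s)) : ⟪v i, x⟫_𝕜 = 0 := by
  have hle : span 𝕜 (v '' s) ≤ LinearMap.ker (innerₛₗ 𝕜 (v i)) := by
    rw [span_le]
    rintro _ ⟨j, hj, rfl⟩
    exact hv (ne_of_mem_of_not_mem hj hi).symm
  exact hle hx

theorem finrank_eq_of_charpoly_eq_prod {R M : Type*} [CommRing R] [Nontrivial R] [AddCommGroup M]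
    [Module R M] [Module.Free R M] [Module.Finite R M] {T : M →ₗ[R] M} {n : ℕ} {lam : Fin n → R}
    (h : T.charpoly = ∏ i, (X - C (lam i))) : finrank R M = n := by
  rw [← T.charpoly_natDegree, h, natDegree_finsetProd_X_sub_C_eq_card, Finset.card_fin]

section SymmetricOperator

variable {𝕜 V : Type*} [RCLike 𝕜] [NormedAddCommGroup V] [InnerProductSpace 𝕜 V]
  [FiniteDimensional 𝕜 V] {T : V →ₗ[𝕜] V} {n : ℕ}

theorem re_inner_apply_self_eq_sum_eigenvalues (hT : T.IsSymmetric) (hn : finrank 𝕜 V = n) (x : V) :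
    RCLike.re ⟪T x, x⟫_𝕜 =
      ∑ i, hT.eigenvalues hn i * ‖⟪hT.eigenvectorBasis hn i, x⟫_𝕜‖ ^ 2 := by
  rw [← (hT.eigenvectorBasis hn).sum_inner_mul_inner, map_sum]
  refine Finset.sum_congr rfl fun i _ => ?_
  rw [hT, hT.apply_eigenvectorBasis, inner_smul_right, mul_assoc, RCLike.re_ofReal_mul,
    inner_mul_symm_re_eq_norm, norm_mul, norm_inner_symm, sq]

theorem eigenvalue_mul_norm_sq_le_re_inner (hT : T.IsSymmetric) (hn : finrank 𝕜 V = n) (i : Fin n)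
    {x : V} (hx : x ∈ span 𝕜 (hT.eigenvectorBasis hn '' Finset.Iic i)) :
    hT.eigenvalues hn i * ‖x‖ ^ 2 ≤ RCLike.re ⟪T x, x⟫_𝕜 := by
  rw [re_inner_apply_self_eq_sum_eigenvalues hT hn,
    ← (hT.eigenvectorBasis hn).sum_sq_norm_inner_right, Finset.mul_sum]
  refine Finset.sum_le_sum fun k _ => ?_
  by_cases hk : k ∈ Finset.Iic i
  · gcongr
    exact hT.eigenvalues_antitone hn (Finset.mem_Iic.mp hk)
  · simp [inner_eq_zero_of_mem_span_image (hT.eigenvectorBasis hn).orthonormal.2 hk hx]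

theorem re_inner_le_eigenvalue_mul_norm_sq (hT : T.IsSymmetric) (hn : finrank 𝕜 V = n) (i : Fin n)
    {x : V} (hx : x ∈ span 𝕜 (hT.eigenvectorBasis hn '' Finset.Ici i)) :
    RCLike.re ⟪T x, x⟫_𝕜 ≤ hT.eigenvalues hn i * ‖x‖ ^ 2 := by
  rw [re_inner_apply_self_eq_sum_eigenvalues hT hn,
    ← (hT.eigenvectorBasis hn).sum_sq_norm_inner_right, Finset.mul_sum]
  refine Finset.sum_le_sum fun k _ => ?_
  by_cases hk : k ∈ Finset.Ici i
  · gcongr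
    exact hT.eigenvalues_antitone hn (Finset.mem_Ici.mp hk)
  · simp [inner_eq_zero_of_mem_span_image (hT.eigenvectorBasis hn).orthonormal.2 hk hx]

theorem eigenvalues_eq_of_charpoly_eq_prod (hT : T.IsSymmetric) (hn : finrank 𝕜 V = n)
    {lam : Fin n → ℝ} (hlam : Antitone lam) (h : T.charpoly = ∏ i, (X - C (lam i : 𝕜))) :
    hT.eigenvalues hn = lam := by
  have hroots : T.charpoly.roots.map RCLike.re = List.ofFn lam := by
    rw [h, roots_prod _ _ (Finset.prod_ne_zero_iff.mpr fun i _ => X_sub_C_ne_zero _)]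
    simp [Fin.univ_val_map, Function.comp_def]
  have hperm : (List.ofFn (hT.eigenvalues hn)).Perm (List.ofFn lam) := by
    rw [← Multiset.coe_eq_coe, ← hroots, ← hT.sort_roots_charpoly_eq_eigenvalues hn,
      Multiset.sort_eq]
  exact List.ofFn_injective <|
    hperm.eq_of_sortedGE (hT.eigenvalues_antitone hn).sortedGE_ofFn hlam.sortedGE_ofFn

end SymmetricOperator

section Compression

variable {𝕜 V W : Type*} [RCLike 𝕜] [NormedAddCommGroup V] [InnerProductSpace 𝕜 V]
  [FiniteDimensional 𝕜 V] [NormedAddCommGroup W] [InnerProductSpace 𝕜 W] [FiniteDimensional 𝕜 W]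
  {T : V →ₗ[𝕜] V} {S : W →ₗ[𝕜] W} {n m : ℕ}

theorem eigenvalues_compression_le (hT : T.IsSymmetric) (hS : S.IsSymmetric)
    (hn : finrank 𝕜 V = n) (hm : finrank 𝕜 W = m) (E : W →ₗᵢ[𝕜] V)
    (hE : ∀ y, ⟪S y, y⟫_𝕜 = ⟪T (E y), E y⟫_𝕜) {i : Fin n} {j : Fin m} (hij : (i : ℕ) ≤ j) :
    hS.eigenvalues hm j ≤ hT.eigenvalues hn i := by
  refine le_of_finrank_lt_add_of_mul_norm_sq_le (q := fun x => RCLike.re ⟪T x, x⟫_𝕜)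
    (U := (span 𝕜 (hS.eigenvectorBasis hm '' Finset.Iic j)).map E.toLinearMap)
    (U' := span 𝕜 (hT.eigenvectorBasis hn '' Finset.Ici i)) ?_ ?_
    fun x hx => re_inner_le_eigenvalue_mul_norm_sq hT hn i hx
  · rw [← (equivMapOfInjective E.toLinearMap E.injective _).finrank_eq,
      finrank_span_image_finset (hS.eigenvectorBasis hm).orthonormal.linearIndependent,
      finrank_span_image_finset (hT.eigenvectorBasis hn).orthonormal.linearIndependent,
      Fin.card_Iic, Fin.card_Ici]
    omega
  · rintro _ ⟨y, hy, rfl⟩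
    simpa [← hE] using eigenvalue_mul_norm_sq_le_re_inner hS hm j hy

theorem le_eigenvalues_compression (hT : T.IsSymmetric) (hS : S.IsSymmetric)
    (hn : finrank 𝕜 V = n) (hm : finrank 𝕜 W = m) (E : W →ₗᵢ[𝕜] V)
    (hE : ∀ y, ⟪S y, y⟫_𝕜 = ⟪T (E y), E y⟫_𝕜) {i : Fin n} {j : Fin m} (hij : n + j ≤ m + i) :
    hT.eigenvalues hn i ≤ hS.eigenvalues hm j := by
  refine le_of_finrank_lt_add_of_mul_norm_sq_le (q := fun x => RCLike.re ⟪T x, x⟫_𝕜)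
    (U := span 𝕜 (hT.eigenvectorBasis hn '' Finset.Iic i))
    (U' := (span 𝕜 (hS.eigenvectorBasis hm '' Finset.Ici j)).map E.toLinearMap) ?_
    (fun x hx => eigenvalue_mul_norm_sq_le_re_inner hT hn i hx) ?_
  · rw [← (equivMapOfInjective E.toLinearMap E.injective _).finrank_eq,
      finrank_span_image_finset (hS.eigenvectorBasis hm).orthonormal.linearIndependent,
      finrank_span_image_finset (hT.eigenvectorBasis hn).orthonormal.linearIndependent,
      Fin.card_Iic, Fin.card_Ici]
    omega
  · rintro _ ⟨y, hy, rfl⟩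
    simpa [← hE] using re_inner_le_eigenvalue_mul_norm_sq hS hm j hy

end Compression

section Matrix

theorem submatrix_eq_conjTranspose_mul_mul {R ι κ : Type*} [Semiring R] [StarRing R] [Fintype ι]
    [DecidableEq ι] (A : Matrix ι ι R) (e : κ → ι) :
    A.submatrix e e =
      ((1 : Matrix ι ι R).submatrix id e)ᴴ * A * (1 : Matrix ι ι R).submatrix id e := by
  have hrows : (1 : Matrix ι ι R).submatrix e id * A = A.submatrix e id :=
    Matrix.one_submatrix_mul e (Equiv.refl ι) A
  have hcols : A.submatrix e id * (1 : Matrix ι ι R).submatrix id e = A.submatrix e e :=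
    Matrix.mul_submatrix_one (Equiv.refl ι) e (A.submatrix e id)
  rw [Matrix.conjTranspose_submatrix, Matrix.conjTranspose_one, hrows, hcols]

variable {𝕜 ι κ : Type*} [RCLike 𝕜] [Fintype ι] [DecidableEq ι] [Fintype κ] [DecidableEq κ]

theorem charpoly_toEuclideanLin (A : Matrix ι ι 𝕜) :
    (Matrix.toEuclideanLin A).charpoly = A.charpoly :=
  Matrix.charpoly_toLin A (PiLp.basisFun 2 𝕜 ι)

theorem inner_toEuclideanLin_conjTranspose_mul_mul (A : Matrix ι ι 𝕜) (P : Matrix ι κ 𝕜)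
    (x y : EuclideanSpace 𝕜 κ) :
    ⟪Matrix.toEuclideanLin (Pᴴ * A * P) x, y⟫_𝕜 =
      ⟪Matrix.toEuclideanLin A (Matrix.toEuclideanLin P x), Matrix.toEuclideanLin P y⟫_𝕜 := by
  rw [← LinearMap.adjoint_inner_left, ← Matrix.toEuclideanLin_conjTranspose_eq_adjoint]
  simp only [Matrix.toLpLin_mul _ 2, LinearMap.comp_apply]

/-- The isometry of Euclidean spaces given by a matrix with orthonormal columns, along which
`Pᴴ * A * P` is the compression of `A`. -/
noncomputable def euclideanIsometry (P : Matrix ι κ 𝕜) (hP : Pᴴ * P = 1) :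
    EuclideanSpace 𝕜 κ →ₗᵢ[𝕜] EuclideanSpace 𝕜 ι :=
  (Matrix.toEuclideanLin P).isometryOfInner fun x y => by
    rw [← LinearMap.adjoint_inner_left, ← Matrix.toEuclideanLin_conjTranspose_eq_adjoint,
      ← LinearMap.comp_apply, ← Matrix.toLpLin_mul_same, hP, Matrix.toLpLin_one, LinearMap.id_apply]

theorem poincare_separation {m k : ℕ} {A : Matrix ι ι 𝕜} (hA : A.IsHermitian) {P : Matrix ι κ 𝕜}
    (hP : Pᴴ * P = 1) {lam : Fin (m + k) → ℝ} {mu : Fin m → ℝ}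
    (hlam : Antitone lam) (hmu : Antitone mu)
    (hAchar : A.charpoly = ∏ i, (X - C (lam i : 𝕜)))
    (hPchar : (Pᴴ * A * P).charpoly = ∏ j, (X - C (mu j : 𝕜))) (j : Fin m) :
    lam (j.addNat k) ≤ mu j ∧ mu j ≤ lam (j.castAdd k) := by
  have hT : (Matrix.toEuclideanLin A).IsSymmetric := Matrix.isSymmetric_toEuclideanLin_iff.mpr hA
  have hS : (Matrix.toEuclideanLin (Pᴴ * A * P)).IsSymmetric :=
    Matrix.isSymmetric_toEuclideanLin_iff.mpr (Matrix.isHermitian_conjTranspose_mul_mul P hA)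
  rw [← charpoly_toEuclideanLin] at hAchar hPchar
  have hn : finrank 𝕜 (EuclideanSpace 𝕜 ι) = m + k := finrank_eq_of_charpoly_eq_prod hAchar
  have hm : finrank 𝕜 (EuclideanSpace 𝕜 κ) = m := finrank_eq_of_charpoly_eq_prod hPchar
  rw [← eigenvalues_eq_of_charpoly_eq_prod hT hn hlam hAchar,
    ← eigenvalues_eq_of_charpoly_eq_prod hS hm hmu hPchar]
  have hE (y : EuclideanSpace 𝕜 κ) :
      ⟪Matrix.toEuclideanLin (Pᴴ * A * P) y, y⟫_𝕜 =
        ⟪Matrix.toEuclideanLin A (euclideanIsometry P hP y), euclideanIsometry P hP y⟫_𝕜 :=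
    inner_toEuclideanLin_conjTranspose_mul_mul A P y y
  constructor
  · refine le_eigenvalues_compression hT hS hn hm (euclideanIsometry P hP) hE ?_
    simp only [Fin.val_addNat]
    omega
  · exact eigenvalues_compression_le hT hS hn hm (euclideanIsometry P hP) hE le_rfl

theorem cauchy_eigenvalue_interlacing_general {m k : ℕ} {A : Matrix ι ι 𝕜} (hA : A.IsHermitian)
    (e : κ ↪ ι) {lam : Fin (m + k) → ℝ} {mu : Fin m → ℝ} (hlam : Antitone lam) (hmu : Antitone mu)
    (hAchar : A.charpoly = ∏ i, (X - C (lam i : 𝕜)))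
    (hBchar : (A.submatrix e e).charpoly = ∏ j, (X - C (mu j : 𝕜))) (j : Fin m) :
    lam (j.addNat k) ≤ mu j ∧ mu j ≤ lam (j.castAdd k) := by
  have hP : ((1 : Matrix ι ι 𝕜).submatrix id e)ᴴ * (1 : Matrix ι ι 𝕜).submatrix id e = 1 := by
    simpa [Matrix.submatrix_one _ e.injective] using
      (submatrix_eq_conjTranspose_mul_mul (1 : Matrix ι ι 𝕜) e).symm
  rw [submatrix_eq_conjTranspose_mul_mul] at hBchar
  exact poincare_separation hA hP hlam hmu hAchar hBchar j

end Matrix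

/-- **Cauchy eigenvalue interlacing theorem.** If `A` is a real symmetric
`(n+1) × (n+1)` matrix, `A*` is the principal submatrix obtained by deleting the row and
column of index `i₀`, and `lam`, `mu` are the decreasing lists of eigenvalues
(with multiplicity, i.e. the roots of the characteristic polynomials) of `A` and `A*`
respectively, then `lam i ≥ mu i ≥ lam (i+1)` for every `i`. -/
theorem cauchy_eigenvalue_interlacing {n : ℕ}
    (A : Matrix (Fin (n + 1)) (Fin (n + 1)) ℝ) (hA : A.IsSymm) (i₀ : Fin (n + 1))
    (lam : Fin (n + 1) → ℝ) (mu : Fin n → ℝ)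
    (hlam : Antitone lam) (hmu : Antitone mu)
    (hAchar : A.charpoly = ∏ i, (X - C (lam i)))
    (hBchar : (A.submatrix i₀.succAbove i₀.succAbove).charpoly = ∏ i, (X - C (mu i))) :
    ∀ i : Fin n, lam i.succ ≤ mu i ∧ mu i ≤ lam i.castSucc :=
  cauchy_eigenvalue_interlacing_general (Matrix.isHermitian_iff_isSymm.mpr hA) i₀.succAboveEmb
    hlam hmu hAchar hBchar
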